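/- arXiv:1902.11056 — 3 statements merged into one kernel-verified Lean document; each statement's English description precedes it below -/
import Mathlib

section
/- Let δ > 0 and let O ⊆ ℝ² be a union of closed grid cells (i.e., O = ⋃_{(j,k) ∈ S} [jδ,(j+1)δ] × [kδ,(k+1)δ] for some S ⊆ ℤ²). If p = (p₁, p₂) is a grid node with p ∉ O, then the open square (p₁ − δ, p₁ + δ) × (p₂ − δ, p₂ + δ) is disjoint from O; in other words, the four closed grid cells having p as a common vertex contain no point of O. -/
/-- The closed grid cell indexed by `(j, k)` in the grid of resolution `δ`:
the set `[jδ, (j+1)δ] × [kδ, (k+1)δ] ⊆ ℝ²`. -/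
def gridCell (δ : ℝ) (j k : ℤ) : Set (EuclideanSpace ℝ (Fin 2)) :=
  {x | x 0 ∈ Set.Icc ((j : ℝ) * δ) ((j + 1 : ℝ) * δ) ∧
       x 1 ∈ Set.Icc ((k : ℝ) * δ) ((k + 1 : ℝ) * δ)}

/-!
The argument is one-dimensional. If a point within less than `δ` of the grid value `mδ` lies in
`[jδ, (j+1)δ]`, then `m - 1 < j + 1` and `j < m + 1`, so integrality gives `j ≤ m ≤ j + 1`, that is,
`mδ` lies in `[jδ, (j+1)δ]` too. Hence a cell that meets the open square around a node contains the
node.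
-/

/-- The closed cell `∏ᵢ [jᵢδᵢ, (jᵢ+1)δᵢ]` of the grid with resolution `δᵢ` along axis `i`, the
analogue of `gridCell` in any dimension. Coordinates lie in an ordered group, so integer multiples
are written `•`. -/
def gridBox {ι G : Type*} [AddGroup G] [Preorder G] (δ : ι → G) (j : ι → ℤ) : Set (ι → G) :=
  Set.Icc (fun i => j i • δ i) (fun i => (j i + 1) • δ i)

section OrderedGroup

variable {ι G : Type*} [AddCommGroup G] [LinearOrder G] [IsOrderedAddMonoid G]

theorem zsmul_mem_Icc_of_mem_Ioo_of_mem_Icc {δ y : G} {m j : ℤ}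
    (hy : y ∈ Set.Ioo (m • δ - δ) (m • δ + δ)) (hyj : y ∈ Set.Icc (j • δ) ((j + 1) • δ)) :
    m • δ ∈ Set.Icc (j • δ) ((j + 1) • δ) := by
  have hδ : 0 < δ := by simpa [sub_eq_add_neg] using hy.1.trans hy.2
  rw [sub_eq_add_neg, ← sub_one_zsmul, ← add_one_zsmul] at hy
  have hjm : j < m + 1 := (zsmul_lt_zsmul_iff_left hδ).1 (hyj.1.trans_lt hy.2)
  have hmj : m - 1 < j + 1 := (zsmul_lt_zsmul_iff_left hδ).1 (hy.1.trans_le hyj.2)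
  exact ⟨zsmul_le_zsmul_left hδ.le (by lia), zsmul_le_zsmul_left hδ.le (by lia)⟩

theorem mem_gridBox_of_mem_pi_Ioo {δ p x : ι → G} {m j : ι → ℤ} (hp : ∀ i, p i = m i • δ i)
    (hx : x ∈ Set.univ.pi fun i => Set.Ioo (p i - δ i) (p i + δ i)) (hxj : x ∈ gridBox δ j) :
    p ∈ gridBox δ j := by
  have hpj (i : ι) : p i ∈ Set.Icc (j i • δ i) ((j i + 1) • δ i) := by
    have hxi : x i ∈ Set.Ioo (p i - δ i) (p i + δ i) := hx i (Set.mem_univ i)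
    rw [hp i] at hxi ⊢
    exact zsmul_mem_Icc_of_mem_Ioo_of_mem_Icc hxi ⟨hxj.1 i, hxj.2 i⟩
  exact ⟨fun i => (hpj i).1, fun i => (hpj i).2⟩

theorem open_square_around_grid_node_disjoint_general {δ p : ι → G} {m : ι → ℤ}
    (S : Set (ι → ℤ)) (hp : ∀ i, p i = m i • δ i) (hpS : p ∉ ⋃ j ∈ S, gridBox δ j) :
    Disjoint (Set.univ.pi fun i => Set.Ioo (p i - δ i) (p i + δ i)) (⋃ j ∈ S, gridBox δ j) := by
  refine Set.disjoint_iUnion₂_right.2 fun j hj => Set.disjoint_left.2 fun x hx hxj => hpS ?_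
  exact Set.mem_biUnion hj (mem_gridBox_of_mem_pi_Ioo hp hx hxj)

end OrderedGroup

theorem gridCell_eq_preimage_gridBox (δ : ℝ) (j k : ℤ) :
    gridCell δ j k = WithLp.ofLp ⁻¹' gridBox (fun _ => δ) ![j, k] := by
  ext x
  simp only [gridCell, gridBox, Set.mem_ofPred_eq, Set.mem_preimage, Set.mem_Icc, Pi.le_def,
    Fin.forall_fin_two, Matrix.cons_val_zero, Matrix.cons_val_one, zsmul_eq_mul, Int.cast_add,
    Int.cast_one]
  exact and_and_and_comm

theorem biUnion_gridCell_eq_preimage (δ : ℝ) (S : Set (ℤ × ℤ)) :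
    ⋃ jk ∈ S, gridCell δ jk.1 jk.2 =
      WithLp.ofLp ⁻¹' ⋃ j ∈ (fun jk : ℤ × ℤ => ![jk.1, jk.2]) '' S, gridBox (fun _ => δ) j := by
  simp only [gridCell_eq_preimage_gridBox, Set.biUnion_image, Set.preimage_iUnion]

theorem setOf_mem_Ioo_eq_preimage_pi (a b : Fin 2 → ℝ) :
    {x : EuclideanSpace ℝ (Fin 2) | x 0 ∈ Set.Ioo (a 0) (b 0) ∧ x 1 ∈ Set.Ioo (a 1) (b 1)} =
      WithLp.ofLp ⁻¹' Set.univ.pi fun i => Set.Ioo (a i) (b i) := by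
  ext x
  simp only [Set.mem_ofPred_eq, Set.mem_preimage, Set.mem_univ_pi, Fin.forall_fin_two]

/-- If `O ⊆ ℝ²` is a union of closed grid cells and `p = (p₁, p₂)` is a grid node with
`p ∉ O`, then the open square `(p₁ − δ, p₁ + δ) × (p₂ − δ, p₂ + δ)` is disjoint from `O`. -/
theorem open_square_around_grid_node_disjoint (δ : ℝ) (hδ : 0 < δ) (S : Set (ℤ × ℤ))
    (O : Set (EuclideanSpace ℝ (Fin 2)))
    (hO : O = ⋃ jk ∈ S, gridCell δ jk.1 jk.2)
    (p : EuclideanSpace ℝ (Fin 2)) (m n : ℤ)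
    (hp0 : p 0 = (m : ℝ) * δ) (hp1 : p 1 = (n : ℝ) * δ)
    (hpO : p ∉ O) :
    Disjoint {x : EuclideanSpace ℝ (Fin 2) |
        x 0 ∈ Set.Ioo (p 0 - δ) (p 0 + δ) ∧ x 1 ∈ Set.Ioo (p 1 - δ) (p 1 + δ)} O := by
  have hp : ∀ i, p i = ![m, n] i • δ := by simpa [Fin.forall_fin_two] using ⟨hp0, hp1⟩
  rw [hO, biUnion_gridCell_eq_preimage] at hpO ⊢
  rw [setOf_mem_Ioo_eq_preimage_pi (fun i => p i - δ) (fun i => p i + δ)]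
  exact (open_square_around_grid_node_disjoint_general _ hp hpO).preimage WithLp.ofLp
end

section
/- Let δ > 0 and let O ⊆ ℝ² be a union of closed grid cells (O = ⋃_{(j,k) ∈ S} [jδ,(j+1)δ] × [kδ,(k+1)δ] for some S ⊆ ℤ²). If p and q are two neighboring grid nodes (grid nodes at Euclidean distance exactly δ that differ in exactly one coordinate by δ) and neither p nor q belongs to O, then the closed line segment joining p and q is disjoint from O. -/
/-! A grid node lying strictly within `δ` of a point of a closed cell in every coordinate belongs to
that cell. Hence the open axis-parallel cube of half-side `δ` around a free node is collision-free,
and a segment between neighboring nodes, even diagonal ones, is covered by the cubes around its two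
endpoints. -/

theorem intCast_mul_mem_Icc_of_abs_sub_lt {R : Type*} [Ring R] [LinearOrder R]
    [IsStrictOrderedRing R] {δ x : R} {j m : ℤ} (hx : x ∈ Set.Icc (j * δ) ((j + 1) * δ))
    (hxm : |x - m * δ| < δ) : m * δ ∈ Set.Icc (j * δ) ((j + 1) * δ) := by
  have hδ : 0 < δ := (abs_nonneg _).trans_lt hxm
  obtain ⟨hlower, hupper⟩ := abs_sub_lt_iff.1 hxm
  have hjm : j < m + 1 := by
    have : (j : R) * δ < (m + 1) * δ :=
      calc j * δ ≤ x := hx.1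
        _ < m * δ + δ := sub_lt_iff_lt_add'.1 hlower
        _ = (m + 1) * δ := (add_one_mul _ _).symm
    exact_mod_cast lt_of_mul_lt_mul_right this hδ.le
  have hmj : m < j + 1 + 1 := by
    have : (m : R) * δ < (j + 1 + 1) * δ :=
      calc m * δ < δ + x := sub_lt_iff_lt_add.1 hupper
        _ ≤ δ + (j + 1) * δ := by gcongr; exact hx.2
        _ = (j + 1 + 1) * δ := by rw [add_one_mul (j + 1 : R), add_comm]
    exact_mod_cast lt_of_mul_lt_mul_right this hδ.le
  constructor <;> gcongr <;> norm_cast <;> lia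

section Grid

variable {ι : Type*} {δ : ℝ} {p q x : EuclideanSpace ℝ ι} {O : Set (EuclideanSpace ℝ ι)}

theorem abs_apply_sub_le_half_of_mem_segment (hx : x ∈ segment ℝ p q) :
    (∀ i, |x i - p i| ≤ |p i - q i| / 2) ∨ ∀ i, |x i - q i| ≤ |p i - q i| / 2 := by
  obtain ⟨a, b, ha, hb, hab, rfl⟩ := hx
  obtain rfl : a = 1 - b := eq_sub_of_add_eq hab
  have hleft (i : ι) : |((1 - b) • p + b • q) i - p i| = b * |p i - q i| :=
    calc |((1 - b) • p + b • q) i - p i| = |b * (q i - p i)| := by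
          simp only [PiLp.add_apply, PiLp.smul_apply, smul_eq_mul]
          ring_nf
      _ = b * |p i - q i| := by rw [abs_mul, abs_of_nonneg hb, abs_sub_comm]
  have hright (i : ι) : |((1 - b) • p + b • q) i - q i| = (1 - b) * |p i - q i| :=
    calc |((1 - b) • p + b • q) i - q i| = |(1 - b) * (p i - q i)| := by
          simp only [PiLp.add_apply, PiLp.smul_apply, smul_eq_mul]
          ring_nf
      _ = (1 - b) * |p i - q i| := by rw [abs_mul, abs_of_nonneg ha]
  simp only [hleft, hright, div_eq_inv_mul]
  rcases le_total b 2⁻¹ with hb' | hb'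
  · exact Or.inl fun i => by gcongr
  · exact Or.inr fun i => by gcongr; linarith

/-- The nodes of the grid of resolution `δ`: points whose coordinates are all integer multiples
of `δ`. -/
def IsGridNode (δ : ℝ) (p : EuclideanSpace ℝ ι) : Prop :=
  ∀ i, ∃ m : ℤ, p i = m * δ

/-- The closed grid cell `∏ᵢ [jᵢδ, (jᵢ+1)δ]`, extending `gridCell` to an arbitrary set of
coordinates. -/
def gridCube (δ : ℝ) (j : ι → ℤ) : Set (EuclideanSpace ℝ ι) :=
  {x | ∀ i, x i ∈ Set.Icc (j i * δ) ((j i + 1) * δ)}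

/-- Dilated obstacles at resolution `δ`: arbitrary, possibly infinite, unions of closed grid
cells. -/
def IsDilatedObstacle (δ : ℝ) (O : Set (EuclideanSpace ℝ ι)) : Prop :=
  ∃ S : Set (ι → ℤ), O = ⋃ j ∈ S, gridCube δ j

theorem IsGridNode.mem_gridCube_of_abs_sub_lt (hp : IsGridNode δ p) {j : ι → ℤ}
    (hx : x ∈ gridCube δ j) (hxp : ∀ i, |x i - p i| < δ) : p ∈ gridCube δ j := by
  intro i
  obtain ⟨m, hm⟩ := hp i
  rw [hm]
  exact intCast_mul_mem_Icc_of_abs_sub_lt (hx i) (hm ▸ hxp i)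

theorem IsDilatedObstacle.mem_of_abs_sub_lt (hO : IsDilatedObstacle δ O) (hp : IsGridNode δ p)
    (hx : x ∈ O) (hxp : ∀ i, |x i - p i| < δ) : p ∈ O := by
  obtain ⟨S, rfl⟩ := hO
  obtain ⟨j, hj, hxj⟩ := Set.mem_iUnion₂.1 hx
  exact Set.mem_biUnion hj (hp.mem_gridCube_of_abs_sub_lt hxj hxp)

theorem segment_between_neighbor_nodes_disjoint_general (hδ : 0 < δ) (hO : IsDilatedObstacle δ O)
    (hp : IsGridNode δ p) (hq : IsGridNode δ q) (hpq : ∀ i, |p i - q i| ≤ δ)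
    (hpO : p ∉ O) (hqO : q ∉ O) : Disjoint (segment ℝ p q) O := by
  have hhalf (i : ι) : |p i - q i| / 2 < δ := by linarith [hpq i]
  refine Set.disjoint_left.2 fun x hx hxO => ?_
  rcases abs_apply_sub_le_half_of_mem_segment hx with hxp | hxq
  · exact hpO (hO.mem_of_abs_sub_lt hp hxO fun i => (hxp i).trans_lt (hhalf i))
  · exact hqO (hO.mem_of_abs_sub_lt hq hxO fun i => (hxq i).trans_lt (hhalf i))

end Grid

theorem gridCell_eq_gridCube (δ : ℝ) (j k : ℤ) : gridCell δ j k = gridCube δ ![j, k] := by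
  ext x
  simp [gridCell, gridCube, Fin.forall_fin_two]

theorem isDilatedObstacle_biUnion_gridCell (δ : ℝ) (S : Set (ℤ × ℤ)) :
    IsDilatedObstacle δ (⋃ jk ∈ S, gridCell δ jk.1 jk.2) :=
  ⟨(fun jk => ![jk.1, jk.2]) '' S, by simp only [Set.biUnion_image, gridCell_eq_gridCube]⟩

/-- If `O ⊆ ℝ²` is a union of closed grid cells and `p`, `q` are two neighboring grid
nodes (grid nodes at Euclidean distance exactly `δ` that differ in exactly one
coordinate by `δ`), neither of which belongs to `O`, then the closed line segment
joining `p` and `q` is disjoint from `O`. -/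
theorem segment_between_neighbor_nodes_disjoint (δ : ℝ) (hδ : 0 < δ) (S : Set (ℤ × ℤ))
    (O : Set (EuclideanSpace ℝ (Fin 2)))
    (hO : O = ⋃ jk ∈ S, gridCell δ jk.1 jk.2)
    (p q : EuclideanSpace ℝ (Fin 2)) (mp np mq nq : ℤ)
    (hp0 : p 0 = (mp : ℝ) * δ) (hp1 : p 1 = (np : ℝ) * δ)
    (hq0 : q 0 = (mq : ℝ) * δ) (hq1 : q 1 = (nq : ℝ) * δ)
    (hdist : dist p q = δ)
    (hneighbor : (p 0 = q 0 ∧ |p 1 - q 1| = δ) ∨ (p 1 = q 1 ∧ |p 0 - q 0| = δ))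
    (hpO : p ∉ O) (hqO : q ∉ O) :
    Disjoint (segment ℝ p q) O := by
  have hpq (i : Fin 2) : |p i - q i| ≤ δ := by
    simpa [← hdist, dist_eq_norm] using PiLp.norm_apply_le (p - q) i
  exact segment_between_neighbor_nodes_disjoint_general hδ
    (hO ▸ isDilatedObstacle_biUnion_gridCell δ S) (Fin.forall_fin_two.2 ⟨⟨mp, hp0⟩, np, hp1⟩)
    (Fin.forall_fin_two.2 ⟨⟨mq, hq0⟩, nq, hq1⟩) hpq hpO hqO
end

section
/- Let θ_max ∈ (0, π/2), let c₁ = tan θ_max, and let u, v be nonzero vectors in ℝ². Then |u₁v₂ − u₂v₁| ≤ c₁·(u₁v₁ + u₂v₂) holds if and only if the (unsigned) angle between u and v is at most θ_max. In particular, the inequality forces the inner product u₁v₁ + u₂v₂ to be positive. -/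
/-!
In any real inner product space, `⟪u, v⟫ = ‖u‖ ‖v‖ cos α` and the root of the Gram determinant of
`u, v` is `‖u‖ ‖v‖ sin α`, where `α` is the angle between `u` and `v`; in the plane this root is the
absolute value of the cross product. After division by `‖u‖ ‖v‖` the constraint reads
`sin α ≤ tan θ * cos α`, that is, `sin (α - θ) ≤ 0`. Since `-π ≤ α - θ < π`, this means `α ≤ θ`.
-/

open InnerProductGeometry Real Set
open scoped RealInnerProductSpace

theorem sin_nonpos_iff_of_mem_Ico {x : ℝ} (hx : x ∈ Ico (-π) π) : sin x ≤ 0 ↔ x ≤ 0 :=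
  ⟨fun h ↦ not_lt.mp fun hpos ↦ h.not_gt (sin_pos_of_pos_of_lt_pi hpos hx.2),
    fun h ↦ sin_nonpos_of_nonpos_of_neg_pi_le h hx.1⟩

theorem sin_le_tan_mul_cos_iff {α θ : ℝ} (hθ : 0 < cos θ) (hαθ : α - θ ∈ Ico (-π) π) :
    sin α ≤ tan θ * cos α ↔ α ≤ θ := by
  calc sin α ≤ tan θ * cos α
    _ ↔ sin α * cos θ ≤ sin θ * cos α := by
      rw [tan_eq_sin_div_cos, div_mul_eq_mul_div, le_div_iff₀ hθ]
    _ ↔ sin (α - θ) ≤ 0 := by rw [sin_sub, sub_nonpos, mul_comm (sin θ)]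
    _ ↔ α ≤ θ := by rw [sin_nonpos_iff_of_mem_Ico hαθ, sub_nonpos]

section InnerProductSpace

variable {V : Type*} [NormedAddCommGroup V] [InnerProductSpace ℝ V]

theorem angle_lt_pi_div_two_iff_inner_pos {u v : V} : angle u v < π / 2 ↔ 0 < ⟪u, v⟫ := by
  rw [angle, arccos_lt_pi_div_two]
  refine ⟨fun hdiv ↦ ?_, fun hinner ↦ div_pos hinner (hinner.trans_le (real_inner_le_norm u v))⟩
  contrapose! hdiv
  exact div_nonpos_of_nonpos_of_nonneg hdiv (by positivity)

theorem sqrt_gram_det_le_tan_mul_inner_iff {θ : ℝ} (hθ : θ ∈ Ioo 0 (π / 2)) {u v : V}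
    (hu : u ≠ 0) (hv : v ≠ 0) :
    √(⟪u, u⟫ * ⟪v, v⟫ - ⟪u, v⟫ * ⟪u, v⟫) ≤ tan θ * ⟪u, v⟫ ↔ angle u v ≤ θ := by
  have hnorm : 0 < ‖u‖ * ‖v‖ := by positivity
  have hcos : 0 < cos θ := cos_pos_of_mem_Ioo ⟨by linarith [hθ.1, pi_pos], hθ.2⟩
  have hmem : angle u v - θ ∈ Ico (-π) π :=
    ⟨by linarith [angle_nonneg u v, hθ.2, pi_pos], by linarith [angle_le_pi u v, hθ.1]⟩
  calc √(⟪u, u⟫ * ⟪v, v⟫ - ⟪u, v⟫ * ⟪u, v⟫) ≤ tan θ * ⟪u, v⟫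
    _ ↔ sin (angle u v) * (‖u‖ * ‖v‖) ≤ tan θ * cos (angle u v) * (‖u‖ * ‖v‖) := by
      rw [sin_angle_mul_norm_mul_norm, mul_assoc (tan θ), cos_angle_mul_norm_mul_norm]
    _ ↔ sin (angle u v) ≤ tan θ * cos (angle u v) := mul_le_mul_iff_left₀ hnorm
    _ ↔ angle u v ≤ θ := sin_le_tan_mul_cos_iff hcos hmem

theorem curvature_constraint_iff_angle_le_general {θ : ℝ} (hθ : θ ∈ Ioo 0 (π / 2)) {u v : V}
    (hu : u ≠ 0) (hv : v ≠ 0) :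
    (√(⟪u, u⟫ * ⟪v, v⟫ - ⟪u, v⟫ * ⟪u, v⟫) ≤ tan θ * ⟪u, v⟫ ↔ angle u v ≤ θ) ∧
      (√(⟪u, u⟫ * ⟪v, v⟫ - ⟪u, v⟫ * ⟪u, v⟫) ≤ tan θ * ⟪u, v⟫ → 0 < ⟪u, v⟫) := by
  have hiff := sqrt_gram_det_le_tan_mul_inner_iff hθ hu hv
  exact ⟨hiff, fun h ↦ angle_lt_pi_div_two_iff_inner_pos.mp ((hiff.mp h).trans_lt hθ.2)⟩

end InnerProductSpace

theorem inner_eq_fin_two (u v : EuclideanSpace ℝ (Fin 2)) :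
    ⟪u, v⟫ = u 0 * v 0 + u 1 * v 1 := by
  simp [PiLp.inner_apply, Fin.sum_univ_two, mul_comm]

theorem abs_cross_eq_sqrt_gram_det (u v : EuclideanSpace ℝ (Fin 2)) :
    |u 0 * v 1 - u 1 * v 0| = √(⟪u, u⟫ * ⟪v, v⟫ - ⟪u, v⟫ * ⟪u, v⟫) := by
  rw [← sqrt_sq_eq_abs]
  congr 1
  simp only [inner_eq_fin_two]
  ring

/-- Let `θ_max ∈ (0, π/2)`, `c₁ = tan θ_max`, and let `u, v` be nonzero vectors of `ℝ²`.
Then `|u₁v₂ − u₂v₁| ≤ c₁·(u₁v₁ + u₂v₂)` if and only if the (unsigned) angle between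
`u` and `v` is at most `θ_max`; moreover the inequality forces the inner product
`u₁v₁ + u₂v₂` to be positive. -/
theorem curvature_constraint_iff_angle_le (θmax : ℝ)
    (hθ : θmax ∈ Set.Ioo 0 (Real.pi / 2)) (c₁ : ℝ) (hc : c₁ = Real.tan θmax)
    (u v : EuclideanSpace ℝ (Fin 2)) (hu : u ≠ 0) (hv : v ≠ 0) :
    ((|u 0 * v 1 - u 1 * v 0| ≤ c₁ * (u 0 * v 0 + u 1 * v 1)) ↔
      InnerProductGeometry.angle u v ≤ θmax) ∧
    ((|u 0 * v 1 - u 1 * v 0| ≤ c₁ * (u 0 * v 0 + u 1 * v 1)) →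
      0 < u 0 * v 0 + u 1 * v 1) := by
  rw [abs_cross_eq_sqrt_gram_det, ← inner_eq_fin_two, hc]
  exact curvature_constraint_iff_angle_le_general hθ hu hv
end
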